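/- Let A be a symmetric invertible real n×n matrix, let R and S be symmetric positive definite real n×n matrices, and let K be a natural number with K ≥ 2. Then (1/K) · Tr(A⁻¹(R + S)A⁻¹) < Tr(A⁻¹(R + (1/K)·S)A⁻¹) < Tr(A⁻¹(R + S)A⁻¹). -/

import Mathlib

open Matrix

/-- For a symmetric invertible `A`, positive definite `R, S` and `K ≥ 2`:
`(1/K)·Tr(A⁻¹(R+S)A⁻¹) < Tr(A⁻¹(R + (1/K)·S)A⁻¹) < Tr(A⁻¹(R+S)A⁻¹)`. -/
theorem mcrb_trace_ratio_matrix
    (n : ℕ) (hn : 0 < n) (A R S : Matrix (Fin n) (Fin n) ℝ)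
    (hAsymm : A.IsSymm) (hAinv : IsUnit A.det)
    (hR : R.PosDef) (hS : S.PosDef) (K : ℕ) (hK : 2 ≤ K) :
    (1 / (K : ℝ)) * (A⁻¹ * (R + S) * A⁻¹).trace
        < (A⁻¹ * (R + (1 / (K : ℝ)) • S) * A⁻¹).trace ∧
    (A⁻¹ * (R + (1 / (K : ℝ)) • S) * A⁻¹).trace < (A⁻¹ * (R + S) * A⁻¹).trace := by
  have hI : IsUnit A⁻¹ := by
    rw [Matrix.isUnit_iff_isUnit_det]
    exact Matrix.isUnit_nonsing_inv_det A hAinv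
  have hs : (A⁻¹)ᴴ = A⁻¹ := by
    rw [Matrix.conjTranspose_eq_transpose_of_trivial, Matrix.transpose_nonsing_inv, hAsymm.eq]
  haveI : Nonempty (Fin n) := ⟨⟨0, hn⟩⟩
  have key : ∀ M : Matrix (Fin n) (Fin n) ℝ, M.PosDef → 0 < (A⁻¹ * M * A⁻¹).trace := by
    intro M hM
    have h := (hM.conjTranspose_mul_mul_same (Matrix.mulVec_injective_of_isUnit hI)).trace_pos
    rwa [hs] at h
  have h1 := key R hR
  have h2 := key S hS
  have hK' : (2 : ℝ) ≤ K := by exact_mod_cast hK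
  have hc : 1 / (K : ℝ) < 1 := by
    rw [div_lt_one (by linarith)]
    linarith
  simp only [Matrix.mul_add, Matrix.add_mul, Matrix.trace_add, Matrix.mul_smul, Matrix.smul_mul,
    Matrix.trace_smul, smul_eq_mul]
  constructor <;> nlinarith
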